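/- The simultaneous self-subsumption transformation R is equivalence-preserving: for every CNF formula F and every complete assignment σ of F, F[σ] = R(F)[σ]. -/

import Mathlib

/-- A literal over a variable type `V`: a variable or its negation. -/
inductive Lit (V : Type) where
  | pos : V → Lit V
  | neg : V → Lit V
deriving DecidableEq

variable {V : Type} [DecidableEq V]

/-- Negation of a literal (so that double negation is the identity). -/
def Lit.negate : Lit V → Lit V
  | .pos v => .neg v
  | .neg v => .pos v

/-- The underlying variable of a literal. -/
def Lit.var : Lit V → V
  | .pos v => v
  | .neg v => v

/-- A clause is a finite set of literals. -/
abbrev Clause (V : Type) := Finset (Lit V)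

/-- A CNF formula is a finite set of clauses. -/
abbrev CNF (V : Type) := Finset (Clause V)

/-- `Var(F)`: the variables occurring in a formula. -/
def CNF.vars (F : CNF V) : Finset V := Finset.sup F (fun C => Finset.image Lit.var C)

/-- `Lit(F) = Var(F) ∪ {v̄ : v ∈ Var(F)}`. -/
def CNF.lits (F : CNF V) : Finset (Lit V) :=
  Finset.image Lit.pos (CNF.vars F) ∪ Finset.image Lit.neg (CNF.vars F)

/-- The value of a literal under a complete assignment (given on the variables,
which determines a consistent complete assignment on all literals). -/
def Lit.val (σ : V → Bool) : Lit V → Bool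
  | .pos v => σ v
  | .neg v => !(σ v)

/-- `C[σ]`: delete from `C` every literal mapped to `⊥` by `σ`
(i.e. keep `l` with `¬l ∉ σ`). -/
def Clause.reduce (σ : V → Bool) (C : Clause V) : Clause V :=
  Finset.filter (fun l => Lit.val σ (Lit.negate l) = false) C

/-- `F[σ]`: delete every clause containing a literal mapped to `⊤` by `σ`
(for a complete assignment: every clause containing no false literal is kept)
and delete from each remaining clause every literal mapped to `⊥`. -/
def CNF.reduce (F : CNF V) (σ : V → Bool) : CNF V :=
  Finset.image (Clause.reduce σ) (Finset.filter (fun C => ∀ l ∈ C, Lit.val σ l = false) F)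

/-- Apply a map on literals elementwise to clauses and formulas. -/
def CNF.map (φ : Lit V → Lit V) (F : CNF V) : CNF V :=
  Finset.image (fun C => Finset.image φ C) F

/-- `φ` is a syntactic symmetry of `F`: a bijection of `Lit(F)` respecting
negation with `φ(F) = F`. -/
def IsSynSym (F : CNF V) (φ : Lit V → Lit V) : Prop :=
  Set.BijOn φ (CNF.lits F : Set (Lit V)) (CNF.lits F : Set (Lit V)) ∧
  (∀ l ∈ CNF.lits F, φ (Lit.negate l) = Lit.negate (φ l)) ∧
  CNF.map φ F = F

/-- `φ` is a semantic symmetry of `F`: a bijection of `Lit(F)` respecting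
negation with `F[σ] = φ(F)[σ]` for every complete assignment `σ`. -/
def IsSemSym (F : CNF V) (φ : Lit V → Lit V) : Prop :=
  Set.BijOn φ (CNF.lits F : Set (Lit V)) (CNF.lits F : Set (Lit V)) ∧
  (∀ l ∈ CNF.lits F, φ (Lit.negate l) = Lit.negate (φ l)) ∧
  ∀ σ : V → Bool, CNF.reduce F σ = CNF.reduce (CNF.map φ F) σ

/-- Extend a map defined on the literal set `S` by the identity outside `S`. -/
def extendId (S : Finset (Lit V)) (φ : Lit V → Lit V) : Lit V → Lit V :=
  fun l => if l ∈ S then φ l else l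

/-- `F[l ↦ ⊤]`: delete every clause containing `l` and delete `l̄` from every
remaining clause. -/
def CNF.assignTrue (F : CNF V) (l : Lit V) : CNF V :=
  Finset.image (fun C => Finset.erase C (Lit.negate l)) (Finset.filter (fun C => l ∉ C) F)

/-- `f_F(C₁, C, x)` holds for some `C₁ ∈ F`: the literal `x` can be removed
from the clause `C` by self-subsuming resolution in `F`. -/
def Removable (F : CNF V) (C : Clause V) (x : Lit V) : Prop :=
  x ∈ C ∧ ∃ C₁ ∈ F, Lit.negate x ∈ C₁ ∧ C₁.erase (Lit.negate x) ⊂ C.erase x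

open Classical in
/-- `r_F(C)`: if there is exactly one literal removable from `C` by
self-subsuming resolution in `F`, remove it; otherwise leave `C` unchanged. -/
noncomputable def rFun (F : CNF V) (C : Clause V) : Clause V :=
  if h : ∃! x : Lit V, Removable F C x then C.erase h.choose else C

/-- Simultaneous self-subsumption: `R(F) = {r_F(C) : C ∈ F}`. -/
noncomputable def RFun (F : CNF V) : CNF V := Finset.image (rFun F) F

/-! Under a complete assignment every surviving clause becomes empty, so `F[σ]` is `{∅}` or `∅`
according to whether `σ` falsifies some clause of `F`. Removing literals keeps falsified clauses
falsified. Conversely, let `σ` falsify `C ∖ {x}`, where `x` is removable from `C` because of `C₁`: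
if `σ` makes `x` false it falsifies `C`, and otherwise it falsifies `C₁`. In both cases the
falsified clause belongs to the original formula `F`, so removals made simultaneously do not
interfere. -/

omit [DecidableEq V] in
theorem Lit.val_negate (σ : V → Bool) (l : Lit V) : l.negate.val σ = !l.val σ := by
  cases l <;> simp [Lit.negate, Lit.val]

/-- A clause is falsified by a complete assignment when all its literals are false; these are the
clauses that survive in `F[σ]`. -/
def Clause.Falsified (σ : V → Bool) (C : Clause V) : Prop :=
  ∀ l ∈ C, l.val σ = false

namespace Clause

variable {σ : V → Bool} {C C₁ : Clause V} {x : Lit V}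

omit [DecidableEq V] in
theorem Falsified.mono (hsub : C₁ ⊆ C) (hC : C.Falsified σ) : C₁.Falsified σ :=
  fun l hl => hC l (hsub hl)

omit [DecidableEq V] in
theorem reduce_eq_empty_iff : C.reduce σ = ∅ ↔ C.Falsified σ := by
  simp [reduce, Falsified, Finset.filter_eq_empty_iff, Lit.val_negate]

theorem falsified_of_erase (hx : x.val σ = false) (hC : Falsified σ (C.erase x)) :
    C.Falsified σ := by
  intro l hl
  obtain rfl | hne := eq_or_ne l x
  · exact hx
  · exact hC l (Finset.mem_erase.2 ⟨hne, hl⟩)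

theorem falsified_or_falsified_of_erase (hsub : C₁.erase x.negate ⊆ C.erase x)
    (hC : Falsified σ (C.erase x)) : C.Falsified σ ∨ C₁.Falsified σ := by
  cases hx : x.val σ with
  | false => exact .inl (falsified_of_erase hx hC)
  | true =>
    have hneg : x.negate.val σ = false := by rw [Lit.val_negate, hx, Bool.not_true]
    exact .inr (falsified_of_erase hneg (hC.mono hsub))

end Clause

namespace CNF

variable {F G : CNF V} {σ : V → Bool}

theorem mem_reduce {D : Clause V} :
    D ∈ F.reduce σ ↔ D = ∅ ∧ ∃ C ∈ F, C.Falsified σ := by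
  simp only [reduce, Finset.mem_image, Finset.mem_filter]
  constructor
  · rintro ⟨C, ⟨hCF, hC⟩, rfl⟩
    exact ⟨Clause.reduce_eq_empty_iff.2 hC, C, hCF, hC⟩
  · rintro ⟨rfl, C, hCF, hC⟩
    exact ⟨C, ⟨hCF, hC⟩, Clause.reduce_eq_empty_iff.2 hC⟩

theorem reduce_eq_reduce_iff :
    F.reduce σ = G.reduce σ ↔
      ((∃ C ∈ F, C.Falsified σ) ↔ ∃ C ∈ G, C.Falsified σ) := by
  rw [Finset.ext_iff]
  simp only [mem_reduce, and_congr_right_iff, forall_eq]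

end CNF

theorem Removable.exists_falsified {F : CNF V} {σ : V → Bool} {C : Clause V} {x : Lit V}
    (hx : Removable F C x) (hCF : C ∈ F) (hC : Clause.Falsified σ (C.erase x)) :
    ∃ C' ∈ F, C'.Falsified σ := by
  obtain ⟨-, C₁, hC₁F, -, hsub⟩ := hx
  rcases Clause.falsified_or_falsified_of_erase hsub.subset hC with hC | hC₁
  · exact ⟨C, hCF, hC⟩
  · exact ⟨C₁, hC₁F, hC₁⟩

theorem rFun_eq_self_or_erase (F : CNF V) (C : Clause V) :
    rFun F C = C ∨ ∃ x, Removable F C x ∧ rFun F C = C.erase x := by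
  unfold rFun
  split_ifs with h
  · exact .inr ⟨h.choose, h.choose_spec.1, rfl⟩
  · exact .inl rfl

theorem simultaneous_self_subsumption_equivalence_preserving_general
    (F : CNF V) (σ : V → Bool) (r : Clause V → Clause V)
    (hr : ∀ C ∈ F, r C = C ∨ ∃ x, Removable F C x ∧ r C = C.erase x) :
    CNF.reduce F σ = CNF.reduce (F.image r) σ := by
  rw [CNF.reduce_eq_reduce_iff, Finset.exists_mem_image]
  constructor
  · rintro ⟨C, hCF, hC⟩
    have hsub : r C ⊆ C := by
      obtain hself | ⟨x, -, herase⟩ := hr C hCF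
      · exact hself.subset
      · exact herase ▸ Finset.erase_subset x C
    exact ⟨C, hCF, hC.mono hsub⟩
  · rintro ⟨C, hCF, hC⟩
    obtain hself | ⟨x, hx, herase⟩ := hr C hCF
    · exact ⟨C, hCF, hself ▸ hC⟩
    · exact hx.exists_falsified hCF (herase ▸ hC)

/-- Simultaneous self-subsumption is equivalence-preserving:
for every CNF formula `F` and every complete assignment `σ`,
`F[σ] = R(F)[σ]`. -/
theorem simultaneous_self_subsumption_equivalence_preserving
    (F : CNF V) (σ : V → Bool) :
    CNF.reduce F σ = CNF.reduce (RFun F) σ :=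
  simultaneous_self_subsumption_equivalence_preserving_general F σ (rFun F)
    fun C _ => rFun_eq_self_or_erase F C
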